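/- arXiv:2307.09932 — 5 statements merged into one kernel-verified Lean document; each statement's English description precedes it below -/
import Mathlib

section
/- Let w₁, w₂, W₁, W₂ be smooth real-valued functions on ℝ³ (coordinates (t,x,y)) with ∂_xWᵢ = ∂_ywᵢ for i = 1,2, satisfying the potential KP-II equations 4∂_twᵢ + ∂_x³wᵢ + 3(∂_xwᵢ)² + 3∂_yWᵢ = 0 (i = 1,2) and the Bäcklund relation W₂ − W₁ = ∂_x(w₂ + w₁) + (1/2)(w₂ − w₁)². Then v := (w₂ − w₁)/2 and V := (W₂ − W₁)/2 satisfy ∂_xV = ∂_yv and the modified KP-II equation 4∂_tv + ∂_x³v + 3∂_yV − 6v²∂_xv + 6(∂_xv)V = 0. -/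
noncomputable def pt (f : ℝ → ℝ → ℝ → ℝ) : ℝ → ℝ → ℝ → ℝ :=
  fun t x y => deriv (fun s => f s x y) t

noncomputable def px (f : ℝ → ℝ → ℝ → ℝ) : ℝ → ℝ → ℝ → ℝ :=
  fun t x y => deriv (fun s => f t s y) x

noncomputable def py (f : ℝ → ℝ → ℝ → ℝ) : ℝ → ℝ → ℝ → ℝ :=
  fun t x y => deriv (fun s => f t x s) y

/-- Joint smoothness of a curried function of three variables. -/
def JointlySmooth (f : ℝ → ℝ → ℝ → ℝ) : Prop :=
  ContDiff ℝ (⊤ : ℕ∞) fun p : ℝ × ℝ × ℝ => f p.1 p.2.1 p.2.2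

namespace JointlySmooth

variable {f g : ℝ → ℝ → ℝ → ℝ}

theorem differentiable_fst (hf : JointlySmooth f) (x y : ℝ) :
    Differentiable ℝ fun s => f s x y :=
  (hf.differentiable (by simp)).comp
    (by fun_prop : Differentiable ℝ fun s : ℝ => ((s, x, y) : ℝ × ℝ × ℝ))

theorem differentiable_snd (hf : JointlySmooth f) (t y : ℝ) :
    Differentiable ℝ fun s => f t s y :=
  (hf.differentiable (by simp)).comp
    (by fun_prop : Differentiable ℝ fun s : ℝ => ((t, s, y) : ℝ × ℝ × ℝ))

theorem differentiable_thd (hf : JointlySmooth f) (t x : ℝ) :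
    Differentiable ℝ fun s => f t x s :=
  (hf.differentiable (by simp)).comp
    (by fun_prop : Differentiable ℝ fun s : ℝ => ((t, x, s) : ℝ × ℝ × ℝ))

theorem px_eq_fderiv (hf : JointlySmooth f) (t x y : ℝ) :
    px f t x y =
      fderiv ℝ (fun p : ℝ × ℝ × ℝ => f p.1 p.2.1 p.2.2) (t, x, y) (0, 1, 0) := by
  have hline : HasDerivAt (fun s : ℝ => ((t, s, y) : ℝ × ℝ × ℝ)) (0, 1, 0) x :=
    (hasDerivAt_const x t).prodMk ((hasDerivAt_id x).prodMk (hasDerivAt_const x y))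
  exact ((hf.differentiable (by simp) (t, x, y)).hasFDerivAt.comp_hasDerivAt x hline).deriv

theorem px (hf : JointlySmooth f) : JointlySmooth (px f) := by
  have h : ContDiff ℝ (⊤ : ℕ∞) fun p : ℝ × ℝ × ℝ =>
      fderiv ℝ (fun p : ℝ × ℝ × ℝ => f p.1 p.2.1 p.2.2) p (0, 1, 0) :=
    (hf.fderiv_right (by simp)).clm_apply contDiff_const
  unfold JointlySmooth
  simpa only [hf.px_eq_fderiv] using h

theorem pt_half_sub (hf : JointlySmooth f) (hg : JointlySmooth g) :
    pt (fun a b c => (f a b c - g a b c) / 2) =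
      fun a b c => (pt f a b c - pt g a b c) / 2 := by
  funext t x y
  simp only [pt, deriv_div_const]
  rw [deriv_fun_sub (hf.differentiable_fst x y t) (hg.differentiable_fst x y t)]

theorem px_half_sub (hf : JointlySmooth f) (hg : JointlySmooth g) :
    _root_.px (fun a b c => (f a b c - g a b c) / 2) =
      fun a b c => (_root_.px f a b c - _root_.px g a b c) / 2 := by
  funext t x y
  simp only [_root_.px, deriv_div_const]
  rw [deriv_fun_sub (hf.differentiable_snd t y x) (hg.differentiable_snd t y x)]

theorem py_half_sub (hf : JointlySmooth f) (hg : JointlySmooth g) :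
    py (fun a b c => (f a b c - g a b c) / 2) =
      fun a b c => (py f a b c - py g a b c) / 2 := by
  funext t x y
  simp only [py, deriv_div_const]
  rw [deriv_fun_sub (hf.differentiable_thd t x y) (hg.differentiable_thd t x y)]

theorem px_add (hf : JointlySmooth f) (hg : JointlySmooth g) :
    _root_.px (fun a b c => f a b c + g a b c) =
      fun a b c => _root_.px f a b c + _root_.px g a b c := by
  funext t x y
  exact deriv_fun_add (hf.differentiable_snd t y x) (hg.differentiable_snd t y x)

end JointlySmooth

/-- the half-difference of two Bäcklund-related solutions of the
potential KP-II equation solves the modified KP-II equation. -/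
theorem backlund_difference_solves_mKPII
    (w₁ w₂ W₁ W₂ : ℝ → ℝ → ℝ → ℝ)
    (hw₁ : ContDiff ℝ (⊤ : ℕ∞) fun p : ℝ × ℝ × ℝ => w₁ p.1 p.2.1 p.2.2)
    (hw₂ : ContDiff ℝ (⊤ : ℕ∞) fun p : ℝ × ℝ × ℝ => w₂ p.1 p.2.1 p.2.2)
    (hW₁ : ContDiff ℝ (⊤ : ℕ∞) fun p : ℝ × ℝ × ℝ => W₁ p.1 p.2.1 p.2.2)
    (hW₂ : ContDiff ℝ (⊤ : ℕ∞) fun p : ℝ × ℝ × ℝ => W₂ p.1 p.2.1 p.2.2)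
    (hW₁x : ∀ t x y, px W₁ t x y = py w₁ t x y)
    (hW₂x : ∀ t x y, px W₂ t x y = py w₂ t x y)
    (hpKP₁ : ∀ t x y, 4 * pt w₁ t x y + px (px (px w₁)) t x y
        + 3 * (px w₁ t x y)^2 + 3 * py W₁ t x y = 0)
    (hpKP₂ : ∀ t x y, 4 * pt w₂ t x y + px (px (px w₂)) t x y
        + 3 * (px w₂ t x y)^2 + 3 * py W₂ t x y = 0)
    (hBT : ∀ t x y, W₂ t x y - W₁ t x y
        = px (fun a b c => w₂ a b c + w₁ a b c) t x y
          + (1/2) * (w₂ t x y - w₁ t x y)^2) :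
    (∀ t x y, px (fun a b c => (W₂ a b c - W₁ a b c)/2) t x y
        = py (fun a b c => (w₂ a b c - w₁ a b c)/2) t x y)
    ∧ (∀ t x y,
        4 * pt (fun a b c => (w₂ a b c - w₁ a b c)/2) t x y
          + px (px (px fun a b c => (w₂ a b c - w₁ a b c)/2)) t x y
          + 3 * py (fun a b c => (W₂ a b c - W₁ a b c)/2) t x y
          - 6 * ((w₂ t x y - w₁ t x y)/2)^2
              * px (fun a b c => (w₂ a b c - w₁ a b c)/2) t x y
          + 6 * px (fun a b c => (w₂ a b c - w₁ a b c)/2) t x y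
              * ((W₂ t x y - W₁ t x y)/2) = 0) := by
  change JointlySmooth w₁ at hw₁
  change JointlySmooth w₂ at hw₂
  change JointlySmooth W₁ at hW₁
  change JointlySmooth W₂ at hW₂
  rw [hW₂.px_half_sub hW₁, hw₂.py_half_sub hw₁, hw₂.pt_half_sub hw₁, hw₂.px_half_sub hw₁,
    hw₂.px.px_half_sub hw₁.px, hw₂.px.px.px_half_sub hw₁.px.px, hW₂.py_half_sub hW₁]
  rw [hw₂.px_add hw₁] at hBT
  refine ⟨fun t x y => ?_, fun t x y => ?_⟩
  · simp only [hW₁x, hW₂x]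
  · linear_combination (hpKP₂ t x y - hpKP₁ t x y) / 2
      + 3 / 2 * (px w₂ t x y - px w₁ t x y) * hBT t x y
end

section
/- Let v, V be smooth real-valued functions on ℝ³ (coordinates (t,x,y)) with ∂_xV = ∂_yv, and suppose v satisfies the modified KP-II equation 4∂_tv + ∂_x³v + 3∂_yV − 6v²∂_xv + 6(∂_xv)V = 0. Then, for either choice of sign, the function u := ±∂_xv + V − v² satisfies the KP-II equation ∂_x(4∂_tu + ∂_x³u + 3∂_x(u²)) + 3∂_y²u = 0. -/
open scoped ContDiff

/-- The algebra of smooth functions of three real variables, in curried form. -/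
def smoothFunctions : Subalgebra ℝ (ℝ → ℝ → ℝ → ℝ) where
  carrier := {f | ContDiff ℝ ∞ fun p : ℝ × ℝ × ℝ => f p.1 p.2.1 p.2.2}
  mul_mem' hf hg := by
    rw [Set.mem_ofPred_eq] at hf hg ⊢
    exact hf.mul hg
  add_mem' hf hg := by
    rw [Set.mem_ofPred_eq] at hf hg ⊢
    exact hf.add hg
  algebraMap_mem' c := by
    rw [Set.mem_ofPred_eq]
    exact contDiff_const (c := c)

lemma mem_smoothFunctions {f : ℝ → ℝ → ℝ → ℝ} :
    f ∈ smoothFunctions ↔ ContDiff ℝ ∞ fun p : ℝ × ℝ × ℝ => f p.1 p.2.1 p.2.2 :=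
  Iff.rfl

/-- The derivative of a curried function of three variables in the direction `w`. -/
noncomputable def dirDeriv (w : ℝ × ℝ × ℝ) (f : ℝ → ℝ → ℝ → ℝ) : ℝ → ℝ → ℝ → ℝ :=
  fun t x y => fderiv ℝ (fun p : ℝ × ℝ × ℝ => f p.1 p.2.1 p.2.2) (t, x, y) w

section dirDeriv

variable {f g : ℝ → ℝ → ℝ → ℝ} (w : ℝ × ℝ × ℝ)

lemma differentiable_of_mem_smoothFunctions (hf : f ∈ smoothFunctions) :
    Differentiable ℝ fun p : ℝ × ℝ × ℝ => f p.1 p.2.1 p.2.2 :=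
  (mem_smoothFunctions.1 hf).differentiable (by simp)

lemma dirDeriv_mem_smoothFunctions (hf : f ∈ smoothFunctions) :
    dirDeriv w f ∈ smoothFunctions :=
  ((mem_smoothFunctions.1 hf).fderiv_right (m := ∞) (by simp)).clm_apply contDiff_const

lemma dirDeriv_add (hf : f ∈ smoothFunctions) (hg : g ∈ smoothFunctions) :
    dirDeriv w (f + g) = dirDeriv w f + dirDeriv w g := by
  funext t x y
  exact congrArg (· w) (fderiv_add (differentiable_of_mem_smoothFunctions hf (t, x, y))
    (differentiable_of_mem_smoothFunctions hg (t, x, y)))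

lemma dirDeriv_smul (c : ℝ) (hf : f ∈ smoothFunctions) :
    dirDeriv w (c • f) = c • dirDeriv w f := by
  funext t x y
  exact congrArg (· w)
    (fderiv_const_smul (differentiable_of_mem_smoothFunctions hf (t, x, y)) c)

lemma dirDeriv_mul (hf : f ∈ smoothFunctions) (hg : g ∈ smoothFunctions) :
    dirDeriv w (f * g) = f * dirDeriv w g + g * dirDeriv w f := by
  funext t x y
  exact congrArg (· w) (fderiv_mul (differentiable_of_mem_smoothFunctions hf (t, x, y))
    (differentiable_of_mem_smoothFunctions hg (t, x, y)))

lemma dirDeriv_comm (w' : ℝ × ℝ × ℝ) (hf : f ∈ smoothFunctions) :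
    dirDeriv w (dirDeriv w' f) = dirDeriv w' (dirDeriv w f) := by
  funext t x y
  have hsymm : IsSymmSndFDerivAt ℝ (fun p : ℝ × ℝ × ℝ => f p.1 p.2.1 p.2.2) (t, x, y) :=
    (mem_smoothFunctions.1 hf).contDiffAt.isSymmSndFDerivAt
      (by simpa using WithTop.coe_le_coe.2 (le_top : (2 : ℕ∞) ≤ ⊤))
  have hdiff : Differentiable ℝ (fderiv ℝ fun p : ℝ × ℝ × ℝ => f p.1 p.2.1 p.2.2) :=
    ((mem_smoothFunctions.1 hf).fderiv_right (m := ∞) (by simp)).differentiable (by simp)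
  have happly (a b : ℝ × ℝ × ℝ) : dirDeriv a (dirDeriv b f) t x y =
      fderiv ℝ (fderiv ℝ fun p : ℝ × ℝ × ℝ => f p.1 p.2.1 p.2.2) (t, x, y) a b := by
    have h := (hdiff (t, x, y)).hasFDerivAt.clm_apply (hasFDerivAt_const b (t, x, y))
    have h' := congrArg (· a) h.fderiv
    simp only [ContinuousLinearMap.comp_zero, zero_add, ContinuousLinearMap.flip_apply] at h'
    exact h'
  rw [happly, happly, hsymm.eq]

lemma pt_eq_dirDeriv (hf : f ∈ smoothFunctions) : pt f = dirDeriv (1, 0, 0) f := by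
  funext t x y
  exact ((differentiable_of_mem_smoothFunctions hf (t, x, y)).hasFDerivAt.comp_hasDerivAt t
    ((hasDerivAt_id t).prodMk (hasDerivAt_const t (x, y)))).deriv

lemma px_eq_dirDeriv (hf : f ∈ smoothFunctions) : px f = dirDeriv (0, 1, 0) f := by
  funext t x y
  exact ((differentiable_of_mem_smoothFunctions hf (t, x, y)).hasFDerivAt.comp_hasDerivAt x
    ((hasDerivAt_const x t).prodMk ((hasDerivAt_id x).prodMk (hasDerivAt_const x y)))).deriv

lemma py_eq_dirDeriv (hf : f ∈ smoothFunctions) : py f = dirDeriv (0, 0, 1) f := by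
  funext t x y
  exact ((differentiable_of_mem_smoothFunctions hf (t, x, y)).hasFDerivAt.comp_hasDerivAt y
    ((hasDerivAt_const y t).prodMk ((hasDerivAt_const y x).prodMk (hasDerivAt_id y)))).deriv

end dirDeriv

/-- An operator that agrees with a directional derivative on smooth functions, as a derivation. -/
def derivationOfEqDirDeriv (P : (ℝ → ℝ → ℝ → ℝ) → ℝ → ℝ → ℝ → ℝ) (w : ℝ × ℝ × ℝ)
    (hP : ∀ {f}, f ∈ smoothFunctions → P f = dirDeriv w f) :
    Derivation ℝ smoothFunctions smoothFunctions :=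
  Derivation.mk'
    { toFun f := ⟨P f, hP f.2 ▸ dirDeriv_mem_smoothFunctions w f.2⟩
      map_add' f g := Subtype.ext <| by
        simp only [hP (f + g).2, hP f.2, hP g.2]
        exact dirDeriv_add w f.2 g.2
      map_smul' c f := Subtype.ext <| by
        simp only [hP (c • f).2, hP f.2]
        exact dirDeriv_smul w c f.2 }
    fun f g => Subtype.ext <| by
      simp only [LinearMap.coe_mk, AddHom.coe_mk, hP (f * g).2, hP f.2, hP g.2]
      exact dirDeriv_mul w f.2 g.2

lemma derivationOfEqDirDeriv_comm {P Q : (ℝ → ℝ → ℝ → ℝ) → ℝ → ℝ → ℝ → ℝ}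
    {w w' : ℝ × ℝ × ℝ} (hP : ∀ {f}, f ∈ smoothFunctions → P f = dirDeriv w f)
    (hQ : ∀ {f}, f ∈ smoothFunctions → Q f = dirDeriv w' f) (f : smoothFunctions) :
    derivationOfEqDirDeriv P w hP (derivationOfEqDirDeriv Q w' hQ f) =
      derivationOfEqDirDeriv Q w' hQ (derivationOfEqDirDeriv P w hP f) := by
  apply Subtype.ext
  change P (Q f) = Q (P f)
  rw [hP f.2, hQ f.2, hP (dirDeriv_mem_smoothFunctions w' f.2),
    hQ (dirDeriv_mem_smoothFunctions w f.2), dirDeriv_comm w w' f.2]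

/-- The Miura transformation in a commutative algebra with three commuting derivations: the KP-II
expression of `s • ∂ₓv + V - v²` is a linear differential operator applied to the mKP-II
expression of `v`. -/
lemma kp_miura_eq_of_derivations {A : Type*} [CommRing A] [Algebra ℝ A]
    (T X Y : Derivation ℝ A A) (hXT : ∀ a, X (T a) = T (X a)) (hXY : ∀ a, X (Y a) = Y (X a))
    (hYT : ∀ a, Y (T a) = T (Y a)) {v V : A} (hV : X V = Y v) {s : ℝ} (hs : s = 1 ∨ s = -1)
    {u E : A} (hu : u = s • X v + V - v ^ 2)
    (hE : E = (4 : ℝ) • T v + X (X (X v)) + (3 : ℝ) • Y V - (6 : ℝ) • v ^ 2 * X v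
      + (6 : ℝ) • X v * V) :
    X ((4 : ℝ) • T u + X (X (X u)) + (3 : ℝ) • X (u ^ 2)) + (3 : ℝ) • Y (Y u) =
      s • X (X E) + Y E - (2 : ℝ) • X (v * E) := by
  subst hu hE
  rcases hs with rfl | rfl <;>
  · simp only [pow_two, map_add, map_sub, map_neg, Derivation.map_smul,
      Derivation.leibniz, smul_eq_mul, hXT, hXY, hYT, hV, one_smul, neg_smul]
    simp only [Algebra.smul_def, map_ofNat]
    ring

/-- the Miura transformation maps solutions of the modified
KP-II equation to solutions of KP-II (for either choice of sign). -/
theorem miura_maps_mKPII_to_KPII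
    (v V : ℝ → ℝ → ℝ → ℝ)
    (hv : ContDiff ℝ (⊤ : ℕ∞) fun p : ℝ × ℝ × ℝ => v p.1 p.2.1 p.2.2)
    (hV : ContDiff ℝ (⊤ : ℕ∞) fun p : ℝ × ℝ × ℝ => V p.1 p.2.1 p.2.2)
    (hVx : ∀ t x y, px V t x y = py v t x y)
    (hmKP : ∀ t x y, 4 * pt v t x y + px (px (px v)) t x y + 3 * py V t x y
        - 6 * (v t x y)^2 * px v t x y + 6 * px v t x y * V t x y = 0)
    (ε : ℝ) (hε : ε = 1 ∨ ε = -1) :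
    ∀ t x y,
      px (fun a b c =>
          4 * pt (fun d e f => ε * px v d e f + V d e f - (v d e f)^2) a b c
          + px (px (px fun d e f => ε * px v d e f + V d e f - (v d e f)^2)) a b c
          + 3 * px (fun d e f => (ε * px v d e f + V d e f - (v d e f)^2)^2) a b c) t x y
        + 3 * py (py fun d e f => ε * px v d e f + V d e f - (v d e f)^2) t x y = 0 := by
  let T := derivationOfEqDirDeriv pt _ pt_eq_dirDeriv
  let X := derivationOfEqDirDeriv px _ px_eq_dirDeriv
  let Y := derivationOfEqDirDeriv py _ py_eq_dirDeriv
  let w : smoothFunctions := ⟨v, hv⟩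
  let W : smoothFunctions := ⟨V, hV⟩
  have hE : (0 : smoothFunctions) = (4 : ℝ) • T w + X (X (X w)) + (3 : ℝ) • Y W
      - (6 : ℝ) • w ^ 2 * X w + (6 : ℝ) • X w * W := by
    apply Subtype.ext
    funext t x y
    exact (hmKP t x y).symm
  have hWx : X W = Y w := by
    apply Subtype.ext
    funext t x y
    exact hVx t x y
  have h := kp_miura_eq_of_derivations T X Y (derivationOfEqDirDeriv_comm _ _)
    (derivationOfEqDirDeriv_comm _ _) (derivationOfEqDirDeriv_comm _ _) hWx hε rfl hE
  simp only [mul_zero, map_zero, smul_zero, add_zero, sub_zero] at h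
  intro t x y
  exact congrFun (congrFun (congrFun (congrArg Subtype.val h) t) x) y
end

section
/- Let τ₁, τ₂ : ℝ² → ℝ (coordinates (x,y)) be smooth and everywhere positive, satisfying the bilinear Bäcklund relation τ₁∂_x²τ₂ − 2(∂_xτ₁)(∂_xτ₂) + τ₂∂_x²τ₁ + τ₂∂_yτ₁ − τ₁∂_yτ₂ = 0. Set u₁ := 2∂_x² log τ₁, u₂ := 2∂_x² log τ₂, h := τ₂/τ₁ and v₂ := ∂_x log(τ₂/τ₁). Then for every smooth complex-valued function g on ℝ²: (a) ∂_x²g + ∂_yg − 2v₂∂_xg = h·(∂_y + ∂_x² + u₂)(h⁻¹g), and (b) −∂_x²g + ∂_yg − 2v₂∂_xg = −h⁻¹·(−∂_y + ∂_x² + u₁)(hg). -/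
noncomputable def pX {E : Type*} [NormedAddCommGroup E] [NormedSpace ℝ E]
    (f : ℝ → ℝ → E) : ℝ → ℝ → E :=
  fun x y => deriv (fun s => f s y) x

noncomputable def pY {E : Type*} [NormedAddCommGroup E] [NormedSpace ℝ E]
    (f : ℝ → ℝ → E) : ℝ → ℝ → E :=
  fun x y => deriv (fun s => f x s) y

theorem pX_eq {E : Type*} [NormedAddCommGroup E] [NormedSpace ℝ E] {f f' : ℝ → ℝ → E}
    (h : ∀ x y, HasDerivAt (fun s => f s y) (f' x y) x) : pX f = f' :=
  funext fun x => funext fun y => (h x y).deriv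

theorem hasDerivAt_pX {E : Type*} [NormedAddCommGroup E] [NormedSpace ℝ E] {f : ℝ → ℝ → E}
    (hf : ContDiff ℝ (⊤ : ℕ∞) fun p : ℝ × ℝ => f p.1 p.2) (x y : ℝ) :
    HasDerivAt (fun s => f s y) (pX f x y) x := by
  have h : ContDiff ℝ (⊤ : ℕ∞) fun s => f s y := hf.comp (contDiff_id.prodMk contDiff_const)
  exact (h.differentiable (by simp) x).hasDerivAt

theorem hasDerivAt_pX_pX {E : Type*} [NormedAddCommGroup E] [NormedSpace ℝ E] {f : ℝ → ℝ → E}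
    (hf : ContDiff ℝ (⊤ : ℕ∞) fun p : ℝ × ℝ => f p.1 p.2) (x y : ℝ) :
    HasDerivAt (fun s => pX f s y) (pX (pX f) x y) x := by
  have h : ContDiff ℝ (⊤ : ℕ∞) fun s => f s y := hf.comp (contDiff_id.prodMk contDiff_const)
  exact ((contDiff_infty_iff_deriv.1 h).2.differentiable (by simp) x).hasDerivAt

theorem hasDerivAt_pY {E : Type*} [NormedAddCommGroup E] [NormedSpace ℝ E] {f : ℝ → ℝ → E}
    (hf : ContDiff ℝ (⊤ : ℕ∞) fun p : ℝ × ℝ => f p.1 p.2) (x y : ℝ) :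
    HasDerivAt (fun s => f x s) (pY f x y) y := by
  have h : ContDiff ℝ (⊤ : ℕ∞) fun s => f x s := hf.comp (contDiff_const.prodMk contDiff_id)
  exact (h.differentiable (by simp) y).hasDerivAt

theorem pX_ofReal_mul {r : ℝ → ℝ → ℝ} {g : ℝ → ℝ → ℂ}
    (hr : ContDiff ℝ (⊤ : ℕ∞) fun p : ℝ × ℝ => r p.1 p.2)
    (hg : ContDiff ℝ (⊤ : ℕ∞) fun p : ℝ × ℝ => g p.1 p.2) :
    pX (fun a b => (r a b : ℂ) * g a b) =
      fun x y => ((pX r x y : ℝ) : ℂ) * g x y + (r x y : ℂ) * pX g x y :=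
  pX_eq fun x y => (hasDerivAt_pX hr x y).ofReal_comp.mul (hasDerivAt_pX hg x y)

theorem pX_pX_ofReal_mul {r : ℝ → ℝ → ℝ} {g : ℝ → ℝ → ℂ}
    (hr : ContDiff ℝ (⊤ : ℕ∞) fun p : ℝ × ℝ => r p.1 p.2)
    (hg : ContDiff ℝ (⊤ : ℕ∞) fun p : ℝ × ℝ => g p.1 p.2) (x y : ℝ) :
    pX (pX fun a b => (r a b : ℂ) * g a b) x y =
      ((pX (pX r) x y : ℝ) : ℂ) * g x y + 2 * ((pX r x y : ℝ) : ℂ) * pX g x y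
        + (r x y : ℂ) * pX (pX g) x y := by
  rw [pX_ofReal_mul hr hg]
  refine (((hasDerivAt_pX_pX hr x y).ofReal_comp.mul (hasDerivAt_pX hg x y)).add
    ((hasDerivAt_pX hr x y).ofReal_comp.mul (hasDerivAt_pX_pX hg x y))).deriv.trans ?_
  ring

theorem pY_ofReal_mul {r : ℝ → ℝ → ℝ} {g : ℝ → ℝ → ℂ}
    (hr : ContDiff ℝ (⊤ : ℕ∞) fun p : ℝ × ℝ => r p.1 p.2)
    (hg : ContDiff ℝ (⊤ : ℕ∞) fun p : ℝ × ℝ => g p.1 p.2) (x y : ℝ) :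
    pY (fun a b => (r a b : ℂ) * g a b) x y =
      ((pY r x y : ℝ) : ℂ) * g x y + (r x y : ℂ) * pY g x y :=
  ((hasDerivAt_pY hr x y).ofReal_comp.mul (hasDerivAt_pY hg x y)).deriv

theorem pX_pX_log {τ : ℝ → ℝ → ℝ}
    (hτ : ContDiff ℝ (⊤ : ℕ∞) fun p : ℝ × ℝ => τ p.1 p.2)
    (hτ₀ : ∀ x y, 0 < τ x y) (x y : ℝ) :
    pX (pX fun a b => Real.log (τ a b)) x y =
      (pX (pX τ) x y * τ x y - pX τ x y * pX τ x y) / τ x y ^ 2 := by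
  rw [pX_eq fun x y => (hasDerivAt_pX hτ x y).log (hτ₀ x y).ne']
  exact ((hasDerivAt_pX_pX hτ x y).div (hasDerivAt_pX hτ x y) (hτ₀ x y).ne').deriv

theorem pX_div {σ τ : ℝ → ℝ → ℝ}
    (hσ : ContDiff ℝ (⊤ : ℕ∞) fun p : ℝ × ℝ => σ p.1 p.2)
    (hτ : ContDiff ℝ (⊤ : ℕ∞) fun p : ℝ × ℝ => τ p.1 p.2)
    (hτ₀ : ∀ x y, 0 < τ x y) : pX (fun a b => σ a b / τ a b) =
    fun x y => (pX σ x y * τ x y - σ x y * pX τ x y) / τ x y ^ 2 :=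
  pX_eq fun x y => (hasDerivAt_pX hσ x y).div (hasDerivAt_pX hτ x y) (hτ₀ x y).ne'

theorem pY_div {σ τ : ℝ → ℝ → ℝ}
    (hσ : ContDiff ℝ (⊤ : ℕ∞) fun p : ℝ × ℝ => σ p.1 p.2)
    (hτ : ContDiff ℝ (⊤ : ℕ∞) fun p : ℝ × ℝ => τ p.1 p.2)
    (hτ₀ : ∀ x y, 0 < τ x y) (x y : ℝ) : pY (fun a b => σ a b / τ a b) x y =
    (pY σ x y * τ x y - σ x y * pY τ x y) / τ x y ^ 2 :=
  ((hasDerivAt_pY hσ x y).div (hasDerivAt_pY hτ x y) (hτ₀ x y).ne').deriv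

theorem pX_pX_div {σ τ : ℝ → ℝ → ℝ}
    (hσ : ContDiff ℝ (⊤ : ℕ∞) fun p : ℝ × ℝ => σ p.1 p.2)
    (hτ : ContDiff ℝ (⊤ : ℕ∞) fun p : ℝ × ℝ => τ p.1 p.2)
    (hτ₀ : ∀ x y, 0 < τ x y) (x y : ℝ) : pX (pX fun a b => σ a b / τ a b) x y =
    (pX (pX σ) x y * τ x y - σ x y * pX (pX τ) x y) / τ x y ^ 2
      - 2 * pX τ x y * (pX σ x y * τ x y - σ x y * pX τ x y) / τ x y ^ 3 := by
  have h₀ := (hτ₀ x y).ne'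
  rw [pX_div hσ hτ hτ₀]
  refine ((((hasDerivAt_pX_pX hσ x y).mul (hasDerivAt_pX hτ x y)).sub
    ((hasDerivAt_pX hσ x y).mul (hasDerivAt_pX_pX hτ x y))).div
    ((hasDerivAt_pX hτ x y).pow 2) (pow_ne_zero 2 h₀)).deriv.trans ?_
  simp only [Pi.mul_apply, Pi.sub_apply, Pi.pow_apply]
  field_simp
  ring

theorem contDiff_div_of_pos {σ τ : ℝ → ℝ → ℝ}
    (hσ : ContDiff ℝ (⊤ : ℕ∞) fun p : ℝ × ℝ => σ p.1 p.2)
    (hτ : ContDiff ℝ (⊤ : ℕ∞) fun p : ℝ × ℝ => τ p.1 p.2)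
    (hτ₀ : ∀ x y, 0 < τ x y) :
    ContDiff ℝ (⊤ : ℕ∞) fun p : ℝ × ℝ => σ p.1 p.2 / τ p.1 p.2 :=
  hσ.div hτ fun p => (hτ₀ p.1 p.2).ne'

theorem pX_log_div {σ τ : ℝ → ℝ → ℝ}
    (hσ : ContDiff ℝ (⊤ : ℕ∞) fun p : ℝ × ℝ => σ p.1 p.2)
    (hτ : ContDiff ℝ (⊤ : ℕ∞) fun p : ℝ × ℝ => τ p.1 p.2)
    (hσ₀ : ∀ x y, 0 < σ x y) (hτ₀ : ∀ x y, 0 < τ x y) (x y : ℝ) :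
    pX (fun a b => Real.log (σ a b / τ a b)) x y =
    pX (fun a b => σ a b / τ a b) x y / (σ x y / τ x y) :=
  ((hasDerivAt_pX (f := fun a b => σ a b / τ a b)
    (contDiff_div_of_pos hσ hτ hτ₀) x y).log (div_pos (hσ₀ x y) (hτ₀ x y)).ne').deriv

/-- the linearized Miura (Darboux) transformations are obtained
by conjugating the Lax operators with h = τ₂/τ₁. -/
theorem linearized_miura_as_conjugated_lax
    (τ₁ τ₂ : ℝ → ℝ → ℝ)
    (hτ₁ : ContDiff ℝ (⊤ : ℕ∞) fun p : ℝ × ℝ => τ₁ p.1 p.2)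
    (hτ₂ : ContDiff ℝ (⊤ : ℕ∞) fun p : ℝ × ℝ => τ₂ p.1 p.2)
    (hpos₁ : ∀ x y, 0 < τ₁ x y) (hpos₂ : ∀ x y, 0 < τ₂ x y)
    (hBT : ∀ x y,
      τ₁ x y * pX (pX τ₂) x y - 2 * pX τ₁ x y * pX τ₂ x y
        + τ₂ x y * pX (pX τ₁) x y + τ₂ x y * pY τ₁ x y - τ₁ x y * pY τ₂ x y = 0)
    (g : ℝ → ℝ → ℂ)
    (hg : ContDiff ℝ (⊤ : ℕ∞) fun p : ℝ × ℝ => g p.1 p.2) :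
    (∀ x y,
      pX (pX g) x y + pY g x y
          - 2 * ((pX (fun a b => Real.log (τ₂ a b / τ₁ a b)) x y : ℝ) : ℂ) * pX g x y
        = ((τ₂ x y / τ₁ x y : ℝ) : ℂ) *
            (pY (fun a b => ((τ₂ a b / τ₁ a b : ℝ) : ℂ)⁻¹ * g a b) x y
              + pX (pX fun a b => ((τ₂ a b / τ₁ a b : ℝ) : ℂ)⁻¹ * g a b) x y
              + ((2 * pX (pX fun a b => Real.log (τ₂ a b)) x y : ℝ) : ℂ)
                  * (((τ₂ x y / τ₁ x y : ℝ) : ℂ)⁻¹ * g x y)))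
    ∧ (∀ x y,
      -pX (pX g) x y + pY g x y
          - 2 * ((pX (fun a b => Real.log (τ₂ a b / τ₁ a b)) x y : ℝ) : ℂ) * pX g x y
        = -(((τ₂ x y / τ₁ x y : ℝ) : ℂ)⁻¹ *
            (-pY (fun a b => ((τ₂ a b / τ₁ a b : ℝ) : ℂ) * g a b) x y
              + pX (pX fun a b => ((τ₂ a b / τ₁ a b : ℝ) : ℂ) * g a b) x y
              + ((2 * pX (pX fun a b => Real.log (τ₁ a b)) x y : ℝ) : ℂ)
                  * (((τ₂ x y / τ₁ x y : ℝ) : ℂ) * g x y)))) := by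
  have hinv : ∀ a b, ((τ₂ a b / τ₁ a b : ℝ) : ℂ)⁻¹ = ((τ₁ a b / τ₂ a b : ℝ) : ℂ) := fun a b => by
    rw [← Complex.ofReal_inv, inv_div]
  have h₁₂ := contDiff_div_of_pos hτ₁ hτ₂ hpos₂
  have h₂₁ := contDiff_div_of_pos hτ₂ hτ₁ hpos₁
  simp only [hinv]
  refine ⟨fun x y => ?_, fun x y => ?_⟩
  all_goals
    have n₁ : (τ₁ x y : ℂ) ≠ 0 := Complex.ofReal_ne_zero.2 (hpos₁ x y).ne'
    have n₂ : (τ₂ x y : ℂ) ≠ 0 := Complex.ofReal_ne_zero.2 (hpos₂ x y).ne'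
    have hB := congrArg ((↑) : ℝ → ℂ) (hBT x y)
    push_cast at hB
  · rw [pX_pX_ofReal_mul (r := fun a b => τ₁ a b / τ₂ a b) h₁₂ hg,
      pY_ofReal_mul (r := fun a b => τ₁ a b / τ₂ a b) h₁₂ hg,
      pX_log_div hτ₂ hτ₁ hpos₂ hpos₁,
      pX_pX_div hτ₁ hτ₂ hpos₂, pY_div hτ₁ hτ₂ hpos₂, pX_div hτ₁ hτ₂ hpos₂,
      pX_div hτ₂ hτ₁ hpos₁, pX_pX_log hτ₂ hpos₂]
    push_cast
    field_simp
    linear_combination (-g x y * τ₂ x y) * hB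
  · rw [pX_pX_ofReal_mul (r := fun a b => τ₂ a b / τ₁ a b) h₂₁ hg,
      pY_ofReal_mul (r := fun a b => τ₂ a b / τ₁ a b) h₂₁ hg,
      pX_log_div hτ₂ hτ₁ hpos₂ hpos₁,
      pX_pX_div hτ₂ hτ₁ hpos₁, pY_div hτ₂ hτ₁ hpos₁, pX_div hτ₂ hτ₁ hpos₁,
      pX_pX_log hτ₁ hpos₁]
    push_cast
    field_simp
    linear_combination (g x y * τ₁ x y) * hB
end

section
/- Let c > 0. For η ∈ ℂ with |Im η| < c let γ(η) be the principal square root of c + iη, and define g(z,η) := (√c/γ(η))·∂_z²(e^{−γ(η)z} sech(√c z)) and g*(z,η) := (1/2)∂_z(e^{γ(−η̄)z} sech(√c z)) (η̄ the complex conjugate of η). Then for every η ∈ ℂ with |Im η| < c: ∫_ℝ g(z,η)·conj(g*(z,η)) dz = iη and ∫_ℝ g(z,η)·conj(g*(z,−η)) dz = 0, where conj denotes complex conjugation. -/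
open MeasureTheory

/-- principal square root of c + iμ -/
noncomputable def gamC (c : ℝ) (μ : ℂ) : ℂ := ((c : ℂ) + Complex.I * μ) ^ ((1 : ℂ)/2)

/-- g(z,η) = (√c/γ(η)) ∂_z²(e^{−γ(η)z} sech(√c z)) -/
noncomputable def gFun (c : ℝ) (η : ℂ) (z : ℝ) : ℂ :=
  ((Real.sqrt c : ℂ) / gamC c η) *
    deriv (deriv fun w : ℝ =>
      Complex.exp (-gamC c η * (w : ℂ)) * ((Real.cosh (Real.sqrt c * w) : ℝ) : ℂ)⁻¹) z

/-- g*(z,η) = (1/2) ∂_z(e^{γ(−η̄)z} sech(√c z)) -/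
noncomputable def gStar (c : ℝ) (η : ℂ) (z : ℝ) : ℂ :=
  (1/2 : ℂ) *
    deriv (fun w : ℝ =>
      Complex.exp (gamC c (-(starRingEnd ℂ η)) * (w : ℂ))
        * ((Real.cosh (Real.sqrt c * w) : ℝ) : ℂ)⁻¹) z

open Filter Topology

lemma hasDerivAt_ofReal_sech (k z : ℝ) :
    HasDerivAt (fun w : ℝ => ((Real.cosh (k * w) : ℝ) : ℂ)⁻¹)
      (-(k * (Real.tanh (k * z) : ℝ) * ((Real.cosh (k * z) : ℝ) : ℂ)⁻¹)) z := by
  have h := ((((hasDerivAt_id z).const_mul k).cosh).inv (Real.cosh_pos _).ne').ofReal_comp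
  have hne : ((Real.cosh (k * z) : ℝ) : ℂ) ≠ 0 := by exact_mod_cast (Real.cosh_pos _).ne'
  refine (h.congr_deriv ?_).congr_of_eventuallyEq (.of_forall fun w => by simp)
  rw [Real.tanh_eq_sinh_div_cosh]
  push_cast at hne ⊢
  simp only [id]
  field_simp

lemma hasDerivAt_ofReal_tanh (k z : ℝ) :
    HasDerivAt (fun w : ℝ => ((Real.tanh (k * w) : ℝ) : ℂ))
      (k * (1 - ((Real.tanh (k * z) : ℝ) : ℂ) ^ 2)) z := by
  have hlin := (hasDerivAt_id z).const_mul k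
  have hne := (Real.cosh_pos (k * z)).ne'
  have h := (hlin.sinh.div hlin.cosh hne).ofReal_comp
  refine (h.congr_deriv ?_).congr_of_eventuallyEq
    (.of_forall fun w => by simp [Real.tanh_eq_sinh_div_cosh])
  rw [Real.tanh_eq_sinh_div_cosh]
  norm_cast
  simp only [id]
  field_simp

lemma sech_sq_eq_one_sub_tanh_sq (x : ℝ) :
    ((Real.cosh x : ℝ) : ℂ)⁻¹ ^ 2 = 1 - ((Real.tanh x : ℝ) : ℂ) ^ 2 := by
  have hne := (Real.cosh_pos x).ne'
  rw [Real.tanh_eq_sinh_div_cosh]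
  norm_cast
  field_simp
  linarith [Real.cosh_sq x]

lemma hasDerivAt_exp_mul_ofReal (a : ℂ) (z : ℝ) :
    HasDerivAt (fun w : ℝ => Complex.exp (a * w)) (a * Complex.exp (a * z)) z := by
  have h := ((Complex.ofRealCLM.hasDerivAt (x := z)).const_mul a).cexp
  simpa [mul_comm] using h

lemma deriv_exp_mul_sech (a : ℂ) (k : ℝ) :
    deriv (fun w : ℝ => Complex.exp (a * w) * ((Real.cosh (k * w) : ℝ) : ℂ)⁻¹) =
      fun z : ℝ => Complex.exp (a * z) * ((Real.cosh (k * z) : ℝ) : ℂ)⁻¹ *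
        (a - k * (Real.tanh (k * z) : ℝ)) := by
  ext z
  refine HasDerivAt.deriv
    (((hasDerivAt_exp_mul_ofReal a z).mul (hasDerivAt_ofReal_sech k z)).congr_deriv ?_)
  ring

lemma deriv_deriv_exp_mul_sech (a : ℂ) (k : ℝ) :
    deriv (deriv fun w : ℝ => Complex.exp (a * w) * ((Real.cosh (k * w) : ℝ) : ℂ)⁻¹) =
      fun z : ℝ => Complex.exp (a * z) * ((Real.cosh (k * z) : ℝ) : ℂ)⁻¹ *
        (a ^ 2 - k ^ 2 - 2 * a * k * (Real.tanh (k * z) : ℝ)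
          + 2 * k ^ 2 * (Real.tanh (k * z) : ℝ) ^ 2) := by
  ext z
  rw [deriv_exp_mul_sech]
  refine HasDerivAt.deriv
    ((((hasDerivAt_exp_mul_ofReal a z).mul (hasDerivAt_ofReal_sech k z)).mul
      (((hasDerivAt_ofReal_tanh k z).const_mul (k : ℂ)).const_sub a)).congr_deriv ?_)
  simp only [Pi.mul_apply]
  ring

lemma norm_exp_mul_sech_sq_le (a : ℂ) (k z : ℝ) :
    ‖Complex.exp (a * z) * ((Real.cosh (k * z) : ℝ) : ℂ)⁻¹ ^ 2‖ ≤
      4 * Real.exp ((a.re - 2 * k) * z) := by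
  have hcosh : Real.exp (k * z) / 2 ≤ Real.cosh (k * z) := by
    rw [Real.cosh_eq]; linarith [Real.exp_pos (-(k * z))]
  have hsq : (Real.exp (k * z) / 2) ^ 2 ≤ Real.cosh (k * z) ^ 2 := by gcongr
  rw [norm_mul, Complex.norm_exp, norm_pow, norm_inv, Complex.norm_real,
    Real.norm_of_nonneg (Real.cosh_pos _).le, inv_pow, ← div_eq_mul_inv,
    div_le_iff₀ (pow_pos (Real.cosh_pos _) 2)]
  have hre : (a * (z : ℂ)).re = (a.re - 2 * k) * z + (k * z + k * z) := by simp; ring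
  rw [hre, Real.exp_add, Real.exp_add]
  nlinarith [Real.exp_pos ((a.re - 2 * k) * z)]

lemma norm_exp_mul_sech_sq_le_neg (a : ℂ) (k z : ℝ) :
    ‖Complex.exp (a * z) * ((Real.cosh (k * z) : ℝ) : ℂ)⁻¹ ^ 2‖ ≤
      4 * Real.exp ((a.re + 2 * k) * z) := by
  have h := norm_exp_mul_sech_sq_le a (-k) z
  rwa [neg_mul, Real.cosh_neg, mul_neg, sub_neg_eq_add] at h

lemma continuous_exp_mul_sech_sq (a : ℂ) (k : ℝ) :
    Continuous fun z : ℝ => Complex.exp (a * z) * ((Real.cosh (k * z) : ℝ) : ℂ)⁻¹ ^ 2 :=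
  continuous_iff_continuousAt.2 fun z =>
    ((hasDerivAt_exp_mul_ofReal a z).mul ((hasDerivAt_ofReal_sech k z).pow 2)).continuousAt

lemma integrable_exp_mul_sech_sq {a : ℂ} {k : ℝ} (ha : |a.re| < 2 * k) :
    Integrable fun z : ℝ => Complex.exp (a * z) * ((Real.cosh (k * z) : ℝ) : ℂ)⁻¹ ^ 2 := by
  obtain ⟨h₁, h₂⟩ := abs_lt.1 ha
  rw [← integrableOn_univ, ← Set.Iic_union_Ioi (a := (0 : ℝ))]
  refine IntegrableOn.union ?_ ?_
  · exact ((integrableOn_exp_mul_Iic (by linarith) 0).const_mul 4).mono'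
      (continuous_exp_mul_sech_sq a k).aestronglyMeasurable
      (.of_forall fun z => norm_exp_mul_sech_sq_le_neg a k z)
  · exact ((integrableOn_exp_mul_Ioi (by linarith) 0).const_mul 4).mono'
      (continuous_exp_mul_sech_sq a k).aestronglyMeasurable
      (.of_forall fun z => norm_exp_mul_sech_sq_le a k z)

lemma tendsto_exp_mul_sech_sq_atTop {a : ℂ} {k : ℝ} (ha : |a.re| < 2 * k) :
    Tendsto (fun z : ℝ => Complex.exp (a * z) * ((Real.cosh (k * z) : ℝ) : ℂ)⁻¹ ^ 2)
      atTop (𝓝 0) := by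
  refine squeeze_zero_norm (norm_exp_mul_sech_sq_le a k) ?_
  have hlin : Tendsto (fun z : ℝ => (a.re - 2 * k) * z) atTop atBot :=
    tendsto_id.const_mul_atTop_of_neg (by linarith [(abs_lt.1 ha).2])
  simpa using (Real.tendsto_exp_atBot.comp hlin).const_mul 4

lemma tendsto_exp_mul_sech_sq_atBot {a : ℂ} {k : ℝ} (ha : |a.re| < 2 * k) :
    Tendsto (fun z : ℝ => Complex.exp (a * z) * ((Real.cosh (k * z) : ℝ) : ℂ)⁻¹ ^ 2)
      atBot (𝓝 0) := by
  refine squeeze_zero_norm (norm_exp_mul_sech_sq_le_neg a k) ?_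
  have hlin : Tendsto (fun z : ℝ => (a.re + 2 * k) * z) atBot atBot :=
    tendsto_id.const_mul_atBot (by linarith [(abs_lt.1 ha).1])
  simpa using (Real.tendsto_exp_atBot.comp hlin).const_mul 4

lemma exists_norm_comp_tanh_le {Q : ℝ → ℂ} (hQ : Continuous Q) :
    ∃ C, ∀ x : ℝ, ‖Q (Real.tanh x)‖ ≤ C := by
  obtain ⟨C, hC⟩ := (isCompact_Icc (a := (-1 : ℝ)) (b := 1)).exists_bound_of_continuousOn
    hQ.continuousOn
  exact ⟨C, fun x => hC _ ⟨(Real.neg_one_lt_tanh x).le, (Real.tanh_lt_one x).le⟩⟩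

lemma continuous_tanh_const_mul (k : ℝ) : Continuous fun z : ℝ => Real.tanh (k * z) := by
  simp_rw [Real.tanh_eq_sinh_div_cosh]
  exact (by fun_prop : Continuous fun z : ℝ => Real.sinh (k * z)).div (by fun_prop)
    fun z => (Real.cosh_pos _).ne'

lemma integrable_exp_mul_sech_sq_mul_comp_tanh {a : ℂ} {k : ℝ} (ha : |a.re| < 2 * k)
    {Q : ℝ → ℂ} (hQ : Continuous Q) :
    Integrable fun z : ℝ => Complex.exp (a * z) * ((Real.cosh (k * z) : ℝ) : ℂ)⁻¹ ^ 2 *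
      Q (Real.tanh (k * z)) := by
  obtain ⟨C, hC⟩ := exists_norm_comp_tanh_le hQ
  exact (integrable_exp_mul_sech_sq ha).mul_bdd
    (hQ.comp (continuous_tanh_const_mul k)).aestronglyMeasurable (.of_forall fun z => hC _)

lemma tendsto_mul_comp_tanh {l : Filter ℝ} {f : ℝ → ℂ} (hf : Tendsto f l (𝓝 0)) (k : ℝ)
    {Q : ℝ → ℂ} (hQ : Continuous Q) :
    Tendsto (fun z => f z * Q (Real.tanh (k * z))) l (𝓝 0) := by
  obtain ⟨C, hC⟩ := exists_norm_comp_tanh_le hQ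
  exact hf.zero_mul_isBoundedUnder_le (isBoundedUnder_of ⟨C, fun z => hC _⟩)

lemma tendsto_tanh_atTop : Tendsto Real.tanh atTop (𝓝 1) := by
  have hexp : Tendsto (fun x : ℝ => 1 - 2 * Real.exp (-x) ^ 2) atTop (𝓝 1) := by
    simpa using ((Real.tendsto_exp_neg_atTop_nhds_zero.pow 2).const_mul 2).const_sub 1
  refine tendsto_of_tendsto_of_tendsto_of_le_of_le hexp tendsto_const_nhds (fun x => ?_)
    fun x => (Real.tanh_lt_one x).le
  have hu := Real.exp_pos (-x)
  have hv := Real.exp_pos x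
  have huv : Real.exp (-x) * Real.exp x = 1 := by rw [← Real.exp_add]; simp
  simp only [Real.tanh_eq]
  rw [le_div_iff₀ (by positivity)]
  have hcube : 0 < Real.exp (-x) ^ 3 := by positivity
  linear_combination 2 * hcube - 2 * Real.exp (-x) * huv

lemma tendsto_tanh_atBot : Tendsto Real.tanh atBot (𝓝 (-1)) := by
  have h := (tendsto_tanh_atTop.comp tendsto_neg_atBot_atTop).neg
  simpa [Function.comp_def] using h

lemma gamC_sq (c : ℝ) (η : ℂ) : gamC c η ^ 2 = c + Complex.I * η := by
  rw [gamC, one_div]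
  exact Complex.cpow_ofNat_inv_pow _ 2

lemma gamC_re_pos {c : ℝ} {η : ℂ} (h : 0 < (c + Complex.I * η : ℂ).re) :
    0 < (gamC c η).re := by
  have hne : (c + Complex.I * η : ℂ) ≠ 0 := fun h0 => by simp [h0] at h
  have harg := abs_lt.1 (Complex.abs_arg_lt_pi_div_two_iff.2 (.inl h))
  rw [gamC, Complex.cpow_def_of_ne_zero hne, Complex.exp_re]
  refine mul_pos (Real.exp_pos _) (Real.cos_pos_of_mem_Ioo ?_)
  have him : (Complex.log (c + Complex.I * η) * (1 / 2)).im =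
      (c + Complex.I * η : ℂ).arg / 2 := by
    rw [show (1 / 2 : ℂ) = ((1 / 2 : ℝ) : ℂ) by norm_num, Complex.im_mul_ofReal, Complex.log_im]
    ring
  rw [him]
  constructor <;> linarith [harg.1, harg.2, Real.pi_pos]

lemma conj_gamC_neg_conj {c : ℝ} {η : ℂ} (h : 0 < (c + Complex.I * η : ℂ).re) :
    (starRingEnd ℂ) (gamC c (-(starRingEnd ℂ η))) = gamC c η := by
  have harg := abs_lt.1 (Complex.abs_arg_lt_pi_div_two_iff.2 (.inl h))
  have hconj : (c : ℂ) + Complex.I * -(starRingEnd ℂ η) =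
      (starRingEnd ℂ) (c + Complex.I * η) := by simp
  rw [gamC, hconj, Complex.conj_cpow _ _ (by linarith [harg.2, Real.pi_pos]), Complex.conj_conj,
    gamC, map_div₀, map_one, map_ofNat]

lemma conj_gStar {c : ℝ} {η : ℂ} (h : 0 < (c + Complex.I * η : ℂ).re) (z : ℝ) :
    (starRingEnd ℂ) (gStar c η z) =
      1 / 2 * (Complex.exp (gamC c η * z) * ((Real.cosh (√c * z) : ℝ) : ℂ)⁻¹ *
        (gamC c η - √c * (Real.tanh (√c * z) : ℝ))) := by
  rw [gStar, deriv_exp_mul_sech]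
  simp only [map_mul, map_sub, map_inv₀, ← Complex.exp_conj, Complex.conj_ofReal,
    conj_gamC_neg_conj h, map_div₀, map_one, map_ofNat]

lemma gFun_eq (c : ℝ) (η : ℂ) (z : ℝ) :
    gFun c η z = √c / gamC c η *
      (Complex.exp (-gamC c η * z) * ((Real.cosh (√c * z) : ℝ) : ℂ)⁻¹ *
        (gamC c η ^ 2 - (√c : ℂ) ^ 2 + 2 * gamC c η * √c * (Real.tanh (√c * z) : ℝ)
          + 2 * (√c : ℂ) ^ 2 * (Real.tanh (√c * z) : ℝ) ^ 2)) := by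
  rw [gFun, deriv_deriv_exp_mul_sech]
  ring

/-- The difference of two numbers in the sector `|arg| < π/4` whose squares sum to `2k²` lies in
the strip `|Re| < 2k`. -/
lemma abs_re_sub_lt {k : ℝ} {β γ : ℂ} (hk : 0 < k) (hβ : 0 < β.re) (hγ : 0 < γ.re)
    (hβ' : 0 < (β ^ 2).re) (hγ' : 0 < (γ ^ 2).re) (hsum : β ^ 2 + γ ^ 2 = 2 * (k : ℂ) ^ 2) :
    |(β - γ).re| < 2 * k := by
  have key {b g p q : ℝ} (hg : 0 < g) (hbg : g ≤ b) (hq : q ^ 2 < g ^ 2)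
      (h : b * p = -(g * q)) : 0 < b ^ 2 + g ^ 2 + 2 * b * g - 2 * p ^ 2 - 2 * q ^ 2 := by
    have hb : 0 < b := hg.trans_le hbg
    have hsq : g ^ 2 ≤ b ^ 2 := by gcongr
    have hp : p ^ 2 ≤ g ^ 2 := by
      refine le_of_mul_le_mul_left ?_ (pow_pos hb 2)
      calc b ^ 2 * p ^ 2 = g ^ 2 * q ^ 2 := by rw [← mul_pow, h]; ring
        _ ≤ b ^ 2 * g ^ 2 := by gcongr
    nlinarith
  have hre := congrArg Complex.re hsum
  have him := congrArg Complex.im hsum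
  simp only [pow_two, Complex.add_re, Complex.mul_re, Complex.add_im, Complex.mul_im,
    Complex.ofReal_re, Complex.ofReal_im, Complex.re_ofNat, Complex.im_ofNat] at hre him hβ' hγ'
  refine abs_lt_of_sq_lt_sq ?_ (by positivity)
  rw [Complex.sub_re]
  rcases le_total γ.re β.re with hle | hle
  · have := key hγ hle (q := γ.im) (p := β.im) (by linarith) (by linarith)
    linarith
  · have := key hβ hle (q := β.im) (p := γ.im) (by linarith) (by linarith)
    linarith

lemma integral_exp_mul_sech_sq_mul {k : ℝ} {β γ : ℂ} (hstrip : |(β - γ).re| < 2 * k)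
    (hsum : β ^ 2 + γ ^ 2 = 2 * (k : ℂ) ^ 2) :
    ∫ z : ℝ, Complex.exp ((β - γ) * z) * ((Real.cosh (k * z) : ℝ) : ℂ)⁻¹ ^ 2 *
      ((β - k * (Real.tanh (k * z) : ℝ)) *
        (γ ^ 2 - (k : ℂ) ^ 2 + 2 * γ * k * (Real.tanh (k * z) : ℝ)
          + 2 * (k : ℂ) ^ 2 * (Real.tanh (k * z) : ℝ) ^ 2)) = 0 := by
  have htendsto {l : Filter ℝ} (hl : Tendsto (fun z : ℝ =>
      Complex.exp ((β - γ) * z) * ((Real.cosh (k * z) : ℝ) : ℂ)⁻¹ ^ 2) l (𝓝 0)) :=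
    tendsto_mul_comp_tanh hl k (Q := fun t : ℝ => (γ ^ 2 - (k : ℂ) ^ 2 - γ * β) / 2
      - (β - γ) / 2 * (k * t) + (k * t) ^ 2 / 2) (by fun_prop)
  have hint := integral_of_hasDerivAt_of_tendsto (fun z => ?_)
    (integrable_exp_mul_sech_sq_mul_comp_tanh hstrip
      (Q := fun t : ℝ => (β - k * t) *
        (γ ^ 2 - (k : ℂ) ^ 2 + 2 * γ * k * t + 2 * (k : ℂ) ^ 2 * t ^ 2)) (by fun_prop))
    (htendsto (tendsto_exp_mul_sech_sq_atBot hstrip))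
    (htendsto (tendsto_exp_mul_sech_sq_atTop hstrip))
  · simpa using hint
  · have hT := (hasDerivAt_ofReal_tanh k z).const_mul (k : ℂ)
    have h := ((hasDerivAt_exp_mul_ofReal (β - γ) z).mul
      ((hasDerivAt_ofReal_sech k z).pow 2)).mul
      (((hT.const_mul ((β - γ) / 2)).const_sub ((γ ^ 2 - (k : ℂ) ^ 2 - γ * β) / 2)).add
        ((hT.pow 2).div_const 2))
    refine h.congr_deriv ?_
    simp only [Pi.mul_apply, Pi.pow_apply, Pi.add_apply]
    generalize ((Real.tanh (k * z) : ℝ) : ℂ) = T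
    generalize ((Real.cosh (k * z) : ℝ) : ℂ)⁻¹ = S
    generalize Complex.exp ((β - γ) * z) = E
    linear_combination (-(E * S ^ 2 * (k * T + γ) / 2)) * hsum

lemma integral_sech_sq_mul {k : ℝ} (hk : 0 < k) (γ : ℂ) :
    ∫ z : ℝ, ((Real.cosh (k * z) : ℝ) : ℂ)⁻¹ ^ 2 *
      ((γ - k * (Real.tanh (k * z) : ℝ)) *
        (γ ^ 2 - (k : ℂ) ^ 2 + 2 * γ * k * (Real.tanh (k * z) : ℝ)
          + 2 * (k : ℂ) ^ 2 * (Real.tanh (k * z) : ℝ) ^ 2)) =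
      2 * γ * (γ ^ 2 - (k : ℂ) ^ 2) / k := by
  have hk0 : (k : ℂ) ≠ 0 := by exact_mod_cast hk.ne'
  have hQ : Continuous fun t : ℝ => (γ * (γ ^ 2 - (k : ℂ) ^ 2) * t
      + (γ ^ 2 + (k : ℂ) ^ 2) * k / 2 * (t : ℂ) ^ 2 - (k : ℂ) ^ 3 / 2 * (t : ℂ) ^ 4) / k := by
    fun_prop
  have hint : Integrable fun z : ℝ => ((Real.cosh (k * z) : ℝ) : ℂ)⁻¹ ^ 2 *
      ((γ - k * (Real.tanh (k * z) : ℝ)) *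
        (γ ^ 2 - (k : ℂ) ^ 2 + 2 * γ * k * (Real.tanh (k * z) : ℝ)
          + 2 * (k : ℂ) ^ 2 * (Real.tanh (k * z) : ℝ) ^ 2)) := by
    have h := integrable_exp_mul_sech_sq_mul_comp_tanh (a := 0) (k := k) (by simpa using hk)
      (Q := fun t : ℝ => (γ - k * t) *
        (γ ^ 2 - (k : ℂ) ^ 2 + 2 * γ * k * t + 2 * (k : ℂ) ^ 2 * t ^ 2)) (by fun_prop)
    simpa only [zero_mul, Complex.exp_zero, one_mul] using h
  rw [integral_of_hasDerivAt_of_tendsto (fun z => ?_) hint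
    ((hQ.tendsto (-1)).comp (tendsto_tanh_atBot.comp (tendsto_id.const_mul_atBot hk)))
    ((hQ.tendsto 1).comp (tendsto_tanh_atTop.comp (tendsto_id.const_mul_atTop hk)))]
  · push_cast
    ring
  · have hT := hasDerivAt_ofReal_tanh k z
    have h := (((hT.const_mul (γ * (γ ^ 2 - (k : ℂ) ^ 2))).add
      ((hT.pow 2).const_mul ((γ ^ 2 + (k : ℂ) ^ 2) * k / 2))).sub
      ((hT.pow 4).const_mul ((k : ℂ) ^ 3 / 2))).div_const (k : ℂ)
    refine h.congr_deriv ?_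
    rw [sech_sq_eq_one_sub_tanh_sq]
    field_simp
    ring

/-- orthogonality relations between the resonant continuous
eigenfunctions of the linearized KP-II operator around a line soliton and
those of its adjoint. -/
theorem resonant_mode_orthogonality (c : ℝ) (hc : 0 < c) :
    ∀ η : ℂ, |η.im| < c →
      (∫ z : ℝ, gFun c η z * (starRingEnd ℂ) (gStar c η z)) = Complex.I * η
      ∧ (∫ z : ℝ, gFun c η z * (starRingEnd ℂ) (gStar c (-η) z)) = 0 := by
  intro η hη
  obtain ⟨h₁, h₂⟩ := abs_lt.1 hη
  have hpos : 0 < (c + Complex.I * η : ℂ).re := by simp; linarith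
  have hpos' : 0 < (c + Complex.I * -η : ℂ).re := by simp; linarith
  have hk : 0 < √c := Real.sqrt_pos.2 hc
  have hkc : (√c : ℂ) ^ 2 = c := by exact_mod_cast Real.sq_sqrt hc.le
  have hk0 : (√c : ℂ) ≠ 0 := by exact_mod_cast hk.ne'
  have hγ := gamC_re_pos hpos
  have hβ := gamC_re_pos hpos'
  have hγ0 : gamC c η ≠ 0 := fun h => by simp [h] at hγ
  have hsum : gamC c (-η) ^ 2 + gamC c η ^ 2 = 2 * (√c : ℂ) ^ 2 := by
    rw [gamC_sq, gamC_sq, hkc]; ring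
  have hexp (β : ℂ) (z : ℝ) : Complex.exp ((β - gamC c η) * z) =
      Complex.exp (-gamC c η * z) * Complex.exp (β * z) := by
    rw [← Complex.exp_add]; ring_nf
  constructor
  · calc _ = ∫ z : ℝ, (√c / gamC c η * (1 / 2)) * (((Real.cosh (√c * z) : ℝ) : ℂ)⁻¹ ^ 2 *
          ((gamC c η - √c * (Real.tanh (√c * z) : ℝ)) *
            (gamC c η ^ 2 - (√c : ℂ) ^ 2 + 2 * gamC c η * √c * (Real.tanh (√c * z) : ℝ)
              + 2 * (√c : ℂ) ^ 2 * (Real.tanh (√c * z) : ℝ) ^ 2))) := by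
          congr with z
          have h := hexp (gamC c η) z
          rw [sub_self, zero_mul, Complex.exp_zero] at h
          rw [gFun_eq, conj_gStar hpos, ← one_mul (((Real.cosh (√c * z) : ℝ) : ℂ)⁻¹ ^ 2), h]
          ring
      _ = Complex.I * η := by
          rw [integral_const_mul, integral_sech_sq_mul hk, gamC_sq, hkc]
          field_simp
          ring
  · calc _ = ∫ z : ℝ, (√c / gamC c η * (1 / 2)) *
          (Complex.exp ((gamC c (-η) - gamC c η) * z) *
            ((Real.cosh (√c * z) : ℝ) : ℂ)⁻¹ ^ 2 *
          ((gamC c (-η) - √c * (Real.tanh (√c * z) : ℝ)) *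
            (gamC c η ^ 2 - (√c : ℂ) ^ 2 + 2 * gamC c η * √c * (Real.tanh (√c * z) : ℝ)
              + 2 * (√c : ℂ) ^ 2 * (Real.tanh (√c * z) : ℝ) ^ 2))) := by
          congr with z
          rw [gFun_eq, conj_gStar hpos', hexp]
          ring
      _ = 0 := by
          rw [integral_const_mul, integral_exp_mul_sech_sq_mul
            (abs_re_sub_lt hk hβ hγ (by rwa [gamC_sq]) (by rwa [gamC_sq]) hsum) hsum, mul_zero]
end

section
/- Let b₁, b₂ ∈ ℝ, and let v₂, V₂, u₁, u₂, V, Ṽ, U₁, Ũ₁, U₂, Ũ₂ be smooth complex-valued functions on ℝ² (coordinates (X,Y)) satisfying: ∂_XV₂ = ∂_Yv₂; u₂ = ∂_Xv₂ + V₂ − v₂²; u₁ = −∂_Xv₂ + V₂ − v₂²; ∂_XṼ = ∂_YV; ∂_XŨ₁ = ∂_YU₁; ∂_XŨ₂ = ∂_YU₂; U₁ = −∂_XV + Ṽ − 2v₂V; U₂ = ∂_XV + Ṽ − 2v₂V; 3(∂_XU₁ + Ũ₁ + 2v₂U₁) + 4(∂_X²V + 3v₂∂_XV − b₁V + 3v₂²V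 + (3/2)u₂V) − 4b₂Ṽ = 0; and 3(−∂_XU₂ + Ũ₂ + 2v₂U₂) + 4(∂_X²V − 3v₂∂_XV − b₁V + 3v₂²V + (3/2)u₁V) − 4b₂Ṽ = 0. If U₂ satisfies 3∂_Y²U₂ − 4b₂∂_X∂_YU₂ + ∂_X²(∂_X²U₂ − 4b₁U₂ + 6u₂U₂) = 0, then U₁ satisfies 3∂_Y²U₁ − 4b₂∂_X∂_YU₁ + ∂_X²(∂_X²U₁ − 4b₁U₁ + 6u₁U₁) = 0. -/
/-- Joint smoothness of a curried function of two real variables. -/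
def IsSmooth (f : ℝ → ℝ → ℂ) : Prop :=
  ContDiff ℝ (⊤ : ℕ∞) fun p : ℝ × ℝ => f p.1 p.2

namespace IsSmooth

variable {f g : ℝ → ℝ → ℂ}

theorem hasFDerivAt (hf : IsSmooth f) (p : ℝ × ℝ) :
    HasFDerivAt (fun p : ℝ × ℝ => f p.1 p.2) (fderiv ℝ (fun p : ℝ × ℝ => f p.1 p.2) p) p :=
  (ContDiff.differentiable hf (by simp) p).hasFDerivAt

theorem hasDerivAt_fst (hf : IsSmooth f) (x y : ℝ) :
    HasDerivAt (fun s => f s y) (fderiv ℝ (fun p : ℝ × ℝ => f p.1 p.2) (x, y) (1, 0)) x := by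
  have h := (hasDerivAt_id' x).prodMk (hasDerivAt_const x y)
  exact (hf.hasFDerivAt (x, y)).comp_hasDerivAt x h

theorem hasDerivAt_snd (hf : IsSmooth f) (x y : ℝ) :
    HasDerivAt (fun s => f x s) (fderiv ℝ (fun p : ℝ × ℝ => f p.1 p.2) (x, y) (0, 1)) y := by
  have h := (hasDerivAt_const y x).prodMk (hasDerivAt_id' y)
  exact (hf.hasFDerivAt (x, y)).comp_hasDerivAt y h

theorem pX_eq_fderiv (hf : IsSmooth f) (x y : ℝ) :
    pX f x y = fderiv ℝ (fun p : ℝ × ℝ => f p.1 p.2) (x, y) (1, 0) :=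
  (hf.hasDerivAt_fst x y).deriv

theorem pY_eq_fderiv (hf : IsSmooth f) (x y : ℝ) :
    pY f x y = fderiv ℝ (fun p : ℝ × ℝ => f p.1 p.2) (x, y) (0, 1) :=
  (hf.hasDerivAt_snd x y).deriv

theorem hasDerivAt_pX (hf : IsSmooth f) (x y : ℝ) :
    HasDerivAt (fun s => f s y) (pX f x y) x :=
  (hf.hasDerivAt_fst x y).differentiableAt.hasDerivAt

theorem hasDerivAt_pY (hf : IsSmooth f) (x y : ℝ) :
    HasDerivAt (fun s => f x s) (pY f x y) y :=
  (hf.hasDerivAt_snd x y).differentiableAt.hasDerivAt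

theorem contDiff_fderiv (hf : IsSmooth f) :
    ContDiff ℝ (⊤ : ℕ∞) (fderiv ℝ fun p : ℝ × ℝ => f p.1 p.2) :=
  ContDiff.fderiv_right (m := (⊤ : ℕ∞)) hf (by simp)

theorem pX (hf : IsSmooth f) : IsSmooth (pX f) := by
  have h := hf.contDiff_fderiv.clm_apply (contDiff_const (c := ((1, 0) : ℝ × ℝ)))
  simpa only [IsSmooth, hf.pX_eq_fderiv] using h

theorem pY (hf : IsSmooth f) : IsSmooth (pY f) := by
  have h := hf.contDiff_fderiv.clm_apply (contDiff_const (c := ((0, 1) : ℝ × ℝ)))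
  simpa only [IsSmooth, hf.pY_eq_fderiv] using h

/-- Mixed partial derivatives of a smooth function commute. -/
theorem pY_pX (hf : IsSmooth f) : _root_.pY (_root_.pX f) = _root_.pX (_root_.pY f) := by
  funext x y
  have hd := (hf.contDiff_fderiv.differentiable (by simp) (x, y)).hasFDerivAt
  rw [hf.pX.pY_eq_fderiv, hf.pY.pX_eq_fderiv]
  simp only [hf.pX_eq_fderiv, hf.pY_eq_fderiv]
  rw [(hd.clm_apply (hasFDerivAt_const ((1, 0) : ℝ × ℝ) (x, y))).fderiv,
    (hd.clm_apply (hasFDerivAt_const ((0, 1) : ℝ × ℝ) (x, y))).fderiv]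
  simpa using (ContDiffAt.isSymmSndFDerivAt (ContDiff.contDiffAt hf)
    (by
      rw [minSmoothness_of_isRCLikeNormedField]
      exact WithTop.coe_le_coe.2 le_top)).eq (0, 1) (1, 0)

theorem const_mul (c : ℂ) (hf : IsSmooth f) : IsSmooth fun a b => c * f a b :=
  ContDiff.mul contDiff_const hf

theorem add (hf : IsSmooth f) (hg : IsSmooth g) : IsSmooth fun a b => f a b + g a b :=
  ContDiff.add hf hg

theorem sub (hf : IsSmooth f) (hg : IsSmooth g) : IsSmooth fun a b => f a b - g a b :=
  ContDiff.sub hf hg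

theorem mul (hf : IsSmooth f) (hg : IsSmooth g) : IsSmooth fun a b => f a b * g a b :=
  ContDiff.mul hf hg

theorem pX_add_const_mul (hf : IsSmooth f) (hg : IsSmooth g) (c : ℂ) :
    (_root_.pX fun a b => f a b + c * g a b) =
      fun a b => _root_.pX f a b + c * _root_.pX g a b := by
  funext x y
  exact ((hf.hasDerivAt_pX x y).add ((hg.hasDerivAt_pX x y).const_mul c)).deriv

theorem pY_add_const_mul (hf : IsSmooth f) (hg : IsSmooth g) (c : ℂ) :
    (_root_.pY fun a b => f a b + c * g a b) =
      fun a b => _root_.pY f a b + c * _root_.pY g a b := by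
  funext x y
  exact ((hf.hasDerivAt_pY x y).add ((hg.hasDerivAt_pY x y).const_mul c)).deriv

end IsSmooth

/-- The `X`-derivative of the linearized time part of the Bäcklund transformation is the linearized
stationary modified KP-II equation for `V`. -/
theorem linearized_mKP_of_backlund
    {b₁ b₂ : ℂ} {v₂ V₂ u₂ V Vt U₁ U₁t : ℝ → ℝ → ℂ}
    (hv₂ : IsSmooth v₂) (hV₂ : IsSmooth V₂) (hV : IsSmooth V) (hVt : IsSmooth Vt)
    (hU₁t : IsSmooth U₁t)
    (hV₂x : ∀ X Y, pX V₂ X Y = pY v₂ X Y)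
    (hu₂def : ∀ X Y, u₂ X Y = pX v₂ X Y + V₂ X Y - (v₂ X Y)^2)
    (hVtx : ∀ X Y, pX Vt X Y = pY V X Y)
    (hU₁tx : ∀ X Y, pX U₁t X Y = pY U₁ X Y)
    (hU₁def : ∀ X Y, U₁ X Y = -pX V X Y + Vt X Y - 2 * v₂ X Y * V X Y)
    (hMt₁ : ∀ X Y,
      3 * (pX U₁ X Y + U₁t X Y + 2 * v₂ X Y * U₁ X Y)
        + 4 * (pX (pX V) X Y + 3 * v₂ X Y * pX V X Y - b₁ * V X Y
            + 3 * (v₂ X Y)^2 * V X Y + (3/2) * u₂ X Y * V X Y)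
        - 4 * b₂ * Vt X Y = 0) (X Y : ℝ) :
    3 * pY Vt X Y - 4 * b₂ * pY V X Y + pX (pX (pX V)) X Y - 4 * b₁ * pX V X Y
      + 6 * ((V₂ X Y - (v₂ X Y)^2) * pX V X Y
        + pX v₂ X Y * (Vt X Y - 2 * v₂ X Y * V X Y)) = 0 := by
  have hU₁ : U₁ = fun a b => -pX V a b + Vt a b - 2 * v₂ a b * V a b := by
    funext a b
    exact hU₁def a b
  have hU₁x : ∀ a b, pX U₁ a b =
      -pX (pX V) a b + pY V a b - 2 * (pX v₂ a b * V a b + v₂ a b * pX V a b) := by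
    intro a b
    rw [hU₁, ← hVtx]
    refine (((hV.pX.hasDerivAt_pX a b).neg.add (hVt.hasDerivAt_pX a b)).sub
      (((hv₂.hasDerivAt_pX a b).const_mul 2).mul (hV.hasDerivAt_pX a b))).deriv.trans ?_
    ring
  have hU₁y : ∀ a b, pY U₁ a b =
      -pX (pY V) a b + pY Vt a b - 2 * (pY v₂ a b * V a b + v₂ a b * pY V a b) := by
    intro a b
    rw [hU₁, ← hV.pY_pX]
    refine (((hV.pX.hasDerivAt_pY a b).neg.add (hVt.hasDerivAt_pY a b)).sub
      (((hv₂.hasDerivAt_pY a b).const_mul 2).mul (hV.hasDerivAt_pY a b))).deriv.trans ?_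
    ring
  have hM : ∀ s, pX (pX V) s Y + 3 * pY V s Y + 3 * U₁t s Y + 6 * (v₂ s Y * Vt s Y)
      + 6 * ((V₂ s Y - v₂ s Y * v₂ s Y) * V s Y) - 4 * b₁ * V s Y - 4 * b₂ * Vt s Y = 0 := by
    intro s
    have h := hMt₁ s Y
    rw [hU₁x, hU₁def, hu₂def] at h
    linear_combination h
  have dv := hv₂.hasDerivAt_pX X Y
  have dV := hV.hasDerivAt_pX X Y
  have dVt := hVt.hasDerivAt_pX X Y
  have hd := (((((((hV.pX.pX.hasDerivAt_pX X Y).add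
    ((hV.pY.hasDerivAt_pX X Y).const_mul 3)).add ((hU₁t.hasDerivAt_pX X Y).const_mul 3)).add
    ((dv.mul dVt).const_mul 6)).add
    ((((hV₂.hasDerivAt_pX X Y).sub (dv.mul dv)).mul dV).const_mul 6)).sub
    (dV.const_mul (4 * b₁))).sub (dVt.const_mul (4 * b₂)))
  have h0 := hd.unique ((hasDerivAt_const X (0 : ℂ)).congr_of_eventuallyEq
    (Filter.Eventually.of_forall hM))
  simp only [Pi.mul_apply, Pi.sub_apply, hU₁tx, hU₁y, hVtx, hV₂x] at h0
  linear_combination h0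

/-- the linearized Miura transformations map solutions of the
zero-eigenvalue equation of the linearized KP-II operator around u₂ to
solutions of the corresponding equation around u₁. -/
theorem linearized_miura_zero_eigenvalue
    (b₁ b₂ : ℝ)
    (v₂ V₂ u₁ u₂ V Vt U₁ U₁t U₂ U₂t : ℝ → ℝ → ℂ)
    (hv₂ : ContDiff ℝ (⊤ : ℕ∞) fun p : ℝ × ℝ => v₂ p.1 p.2)
    (hV₂ : ContDiff ℝ (⊤ : ℕ∞) fun p : ℝ × ℝ => V₂ p.1 p.2)
    (hu₁ : ContDiff ℝ (⊤ : ℕ∞) fun p : ℝ × ℝ => u₁ p.1 p.2)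
    (hu₂ : ContDiff ℝ (⊤ : ℕ∞) fun p : ℝ × ℝ => u₂ p.1 p.2)
    (hV : ContDiff ℝ (⊤ : ℕ∞) fun p : ℝ × ℝ => V p.1 p.2)
    (hVt : ContDiff ℝ (⊤ : ℕ∞) fun p : ℝ × ℝ => Vt p.1 p.2)
    (hU₁ : ContDiff ℝ (⊤ : ℕ∞) fun p : ℝ × ℝ => U₁ p.1 p.2)
    (hU₁t : ContDiff ℝ (⊤ : ℕ∞) fun p : ℝ × ℝ => U₁t p.1 p.2)
    (hU₂ : ContDiff ℝ (⊤ : ℕ∞) fun p : ℝ × ℝ => U₂ p.1 p.2)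
    (hU₂t : ContDiff ℝ (⊤ : ℕ∞) fun p : ℝ × ℝ => U₂t p.1 p.2)
    (hV₂x : ∀ X Y, pX V₂ X Y = pY v₂ X Y)
    (hu₂def : ∀ X Y, u₂ X Y = pX v₂ X Y + V₂ X Y - (v₂ X Y)^2)
    (hu₁def : ∀ X Y, u₁ X Y = -pX v₂ X Y + V₂ X Y - (v₂ X Y)^2)
    (hVtx : ∀ X Y, pX Vt X Y = pY V X Y)
    (hU₁tx : ∀ X Y, pX U₁t X Y = pY U₁ X Y)
    (hU₂tx : ∀ X Y, pX U₂t X Y = pY U₂ X Y)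
    (hU₁def : ∀ X Y, U₁ X Y = -pX V X Y + Vt X Y - 2 * v₂ X Y * V X Y)
    (hU₂def : ∀ X Y, U₂ X Y = pX V X Y + Vt X Y - 2 * v₂ X Y * V X Y)
    (hMt₁ : ∀ X Y,
      3 * (pX U₁ X Y + U₁t X Y + 2 * v₂ X Y * U₁ X Y)
        + 4 * (pX (pX V) X Y + 3 * v₂ X Y * pX V X Y - (b₁ : ℂ) * V X Y
            + 3 * (v₂ X Y)^2 * V X Y + (3/2) * u₂ X Y * V X Y)
        - 4 * (b₂ : ℂ) * Vt X Y = 0)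
    (hMt₂ : ∀ X Y,
      3 * (-pX U₂ X Y + U₂t X Y + 2 * v₂ X Y * U₂ X Y)
        + 4 * (pX (pX V) X Y - 3 * v₂ X Y * pX V X Y - (b₁ : ℂ) * V X Y
            + 3 * (v₂ X Y)^2 * V X Y + (3/2) * u₁ X Y * V X Y)
        - 4 * (b₂ : ℂ) * Vt X Y = 0)
    (hU₂eq : ∀ X Y,
      3 * pY (pY U₂) X Y - 4 * (b₂ : ℂ) * pX (pY U₂) X Y
        + pX (pX fun a b => pX (pX U₂) a b - 4 * (b₁ : ℂ) * U₂ a b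
            + 6 * u₂ a b * U₂ a b) X Y = 0) :
    ∀ X Y,
      3 * pY (pY U₁) X Y - 4 * (b₂ : ℂ) * pX (pY U₁) X Y
        + pX (pX fun a b => pX (pX U₁) a b - 4 * (b₁ : ℂ) * U₁ a b
            + 6 * u₁ a b * U₁ a b) X Y = 0 := by
  intro X Y
  replace hv₂ : IsSmooth v₂ := hv₂
  replace hV : IsSmooth V := hV
  replace hVt : IsSmooth Vt := hVt
  replace hu₂ : IsSmooth u₂ := hu₂
  replace hU₂ : IsSmooth U₂ := hU₂
  have hmKP := linearized_mKP_of_backlund hv₂ hV₂ hV hVt hU₁t hV₂x hu₂def hVtx hU₁tx hU₁def hMt₁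
  have hU : U₁ = fun a b => U₂ a b + (-2) * pX V a b := by
    funext a b
    rw [hU₁def, hU₂def]
    ring
  have hG₂ : IsSmooth fun a b => pX (pX U₂) a b - 4 * (b₁ : ℂ) * U₂ a b
      + 6 * u₂ a b * U₂ a b :=
    (hU₂.pX.pX.sub (hU₂.const_mul _)).add ((hu₂.const_mul 6).mul hU₂)
  have hUxx : pX (pX U₁) = fun a b => pX (pX U₂) a b + (-2) * pX (pX (pX V)) a b := by
    rw [hU, hU₂.pX_add_const_mul hV.pX, hU₂.pX.pX_add_const_mul hV.pX.pX]
  have hG : (fun a b => pX (pX U₁) a b - 4 * (b₁ : ℂ) * U₁ a b + 6 * u₁ a b * U₁ a b) =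
      fun a b => ((pX (pX U₂) a b - 4 * (b₁ : ℂ) * U₂ a b + 6 * u₂ a b * U₂ a b)
        + 6 * pY Vt a b) + (-8 * (b₂ : ℂ)) * pY V a b := by
    funext a b
    rw [hUxx, hU₁def, hU₂def, hu₁def, hu₂def]
    linear_combination (-2) * hmKP a b
  have hGxx := hG₂.add (hVt.pY.const_mul 6)
  have hyVt : pX (pX (pY Vt)) = pX (pY (pY V)) := by
    rw [← hVt.pY_pX, show pX Vt = pY V from funext fun a => funext (hVtx a)]
  have h₂ := hU₂eq X Y
  rw [hG, hGxx.pX_add_const_mul hV.pY, hG₂.pX_add_const_mul hVt.pY,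
    (hG₂.pX.add (hVt.pY.pX.const_mul 6)).pX_add_const_mul hV.pY.pX,
    hG₂.pX.pX_add_const_mul hVt.pY.pX, hyVt, hU, hU₂.pY_add_const_mul hV.pX, hV.pY_pX,
    hU₂.pY.pY_add_const_mul hV.pY.pX, hU₂.pY.pX_add_const_mul hV.pY.pX, hV.pY.pY_pX]
  linear_combination h₂
end
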